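/- Let δ > 0, let A ∈ ℝ^{n×n}, C ∈ ℝ^{m×n}, and let P ∈ ℝ^{n×n} be symmetric positive definite and satisfy the algebraic Riccati equation AP + PAᵀ + I_n − PCᵀCP = 0. Set L := max{1, δ⁻¹} · PCᵀ. Then for every p, every connected interconnection Γ ∈ ℝ^{p×p} all of whose nonzero eigenvalues λ (over ℂ) satisfy Re(λ) ≤ −δ, every r ∈ ℝ^p with rᵀΓ = 0 and rᵀ1 = 1, and every initial vector x(0) ∈ ℝ^{pn}, the solution x(t) = exp(t(I_p ⊗ A + Γ ⊗ LC)) x(0) satisfies |x(t) − (1rᵀ ⊗ exp(tA)) x(0)| → 0 as t → ∞; in particular the blocks x_i(t) synchronize to x̄(t) = (rᵀ ⊗ exp(tA)) x(0). -/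

import Mathlib

open Matrix Filter Topology
open scoped Kronecker

/-- `Γ` is an interconnection: off-diagonal entries are nonnegative and each diagonal
entry is minus the sum of the other entries in its row (equivalently, rows sum to zero). -/
def IsInterconnection {p : ℕ} (Γ : Matrix (Fin p) (Fin p) ℝ) : Prop :=
  (∀ i j, i ≠ j → 0 ≤ Γ i j) ∧ ∀ i, ∑ j, Γ i j = 0

/-- `Γ` is a connected interconnection: it is an interconnection and its graph
(with an edge `(i, j)` whenever `Γ i j > 0`) has a node reachable by a directed
path from every other node. -/
def IsConnectedInterconnection {p : ℕ} (Γ : Matrix (Fin p) (Fin p) ℝ) : Prop :=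
  IsInterconnection Γ ∧
    ∃ k : Fin p, ∀ i : Fin p, Relation.ReflTransGen (fun a b => 0 < Γ a b) i k

/-!
Put `J = 1rᵀ`, a projection with `ΓJ = JΓ = 0`. Then `exp(t(I ⊗ A + Γ ⊗ LC)) - J ⊗ exp(tA)` equals
`((I - J) ⊗ I) exp(t(I ⊗ A + (Γ - δJ) ⊗ LC))`, so it suffices that the deflated generator is
Hurwitz. By a maximum principle along paths of the graph, connectedness makes `ker Γ` the line of
constant vectors, so subtracting `δJ` moves the only zero eigenvalue to `-δ`, and every eigenvalue
of `Γ - δJ` has real part at most `-δ`. The eigenvalues of the deflated generator are those of the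
matrices `A + λLC` with `λ` in the spectrum of `Γ - δJ`, and these are Hurwitz because the Riccati
solution `P` is a Lyapunov certificate for each of them as soon as the gain is at least `1 / (2δ)`.
-/

section Spectrum

variable {ι : Type*} [Fintype ι] [DecidableEq ι] {K : Type*} [Field K]

theorem mem_spectrum_iff_exists_mulVec_eq_smul {M : Matrix ι ι K} {μ : K} :
    μ ∈ spectrum K M ↔ ∃ v, v ≠ 0 ∧ M *ᵥ v = μ • v := by
  rw [← spectrum_toLin', ← Module.End.hasEigenvalue_iff_mem_spectrum]
  constructor
  · intro h
    obtain ⟨v, hv⟩ := h.exists_hasEigenvector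
    exact ⟨v, hv.2, by simpa only [toLin'_apply] using hv.apply_eq_smul⟩
  · rintro ⟨v, hv, hMv⟩
    exact Module.End.hasEigenvalue_of_hasEigenvector
      ⟨Module.End.mem_eigenspace_iff.2 (by rwa [toLin'_apply]), hv⟩

theorem exists_common_eigenvector_of_commute [IsAlgClosed K] {M N : Matrix ι ι K}
    (h : Commute M N) {μ : K} (hμ : μ ∈ spectrum K M) :
    ∃ (ν : K) (v : ι → K), v ≠ 0 ∧ M *ᵥ v = μ • v ∧ N *ᵥ v = ν • v := by
  rw [← spectrum_toLin', ← Module.End.hasEigenvalue_iff_mem_spectrum] at hμ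
  have hcomm : Commute (toLin' M) (toLin' N) := h.map toLinAlgEquiv'
  have hmaps := Module.End.mapsTo_genEigenspace_of_comm hcomm μ 1
  have : Nontrivial (Module.End.eigenspace (toLin' M) μ) := Submodule.nontrivial_iff_ne_bot.2 hμ
  obtain ⟨ν, hν⟩ := Module.End.exists_eigenvalue ((toLin' N).restrict hmaps)
  obtain ⟨v, hv⟩ := hν.exists_hasEigenvector
  refine ⟨ν, v, Subtype.coe_ne_coe.2 hv.2, ?_, ?_⟩
  · simpa only [toLin'_apply] using Module.End.mem_eigenspace_iff.1 v.2
  · exact congrArg Subtype.val hv.apply_eq_smul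

theorem exists_mem_spectrum_add_smul_of_mem_spectrum_kronecker [IsAlgClosed K] {κ : Type*}
    [Fintype κ] [DecidableEq κ] {G : Matrix ι ι K} {A B : Matrix κ κ K} {μ : K}
    (hμ : μ ∈ spectrum K ((1 : Matrix ι ι K) ⊗ₖ A + G ⊗ₖ B)) :
    ∃ ν ∈ spectrum K G, μ ∈ spectrum K (A + ν • B) := by
  -- Read as a matrix `Z`, a common eigenvector with `G ⊗ 1` has eigenvectors of `G` as its rows
  -- and eigenvectors of `A + ν B` as its columns.
  have hcomm : Commute ((1 : Matrix ι ι K) ⊗ₖ A + G ⊗ₖ B) (G ⊗ₖ 1) := by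
    simp only [commute_iff_eq, add_mul, mul_add, ← mul_kronecker_mul, one_mul, mul_one]
  obtain ⟨ν, z, hz, hμz, hνz⟩ := exists_common_eigenvector_of_commute hcomm hμ
  obtain ⟨Z, rfl⟩ := vec_bijective.surjective z
  have hZG : Z * Gᵀ = ν • Z := by
    rwa [kronecker_mulVec_vec, Matrix.one_mul, ← vec_smul, vec_inj] at hνz
  have hZ : (A + ν • B) * Z = μ • Z := by
    rw [add_mulVec, kronecker_mulVec_vec, kronecker_mulVec_vec, ← vec_add, ← vec_smul, vec_inj,
      transpose_one, Matrix.mul_one, Matrix.mul_assoc, hZG] at hμz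
    rw [Matrix.add_mul, smul_mul, ← Matrix.mul_smul, hμz]
  obtain ⟨k, hk⟩ := Function.ne_iff.1 fun h : Z = 0 => hz (vec_eq_zero_iff.2 h)
  obtain ⟨i, hki⟩ := Function.ne_iff.1 hk
  refine ⟨ν, mem_spectrum_iff_exists_mulVec_eq_smul.2 ⟨Z k, fun h => hki (congrFun h i), ?_⟩,
    mem_spectrum_iff_exists_mulVec_eq_smul.2
      ⟨Z.col i, fun h => hki (congrFun h k), congrArg (fun W => col W i) hZ⟩⟩
  rw [← vecMul_transpose]
  exact congrFun hZG k

-- Wielandt deflation: `c u rᵀ` moves the eigenvalue `0` to `c` and leaves the others in place.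
theorem eq_or_mem_spectrum_of_mem_spectrum_add_smul_vecMulVec {G : Matrix ι ι K} {u r : ι → K}
    (hrG : r ᵥ* G = 0) (hru : r ⬝ᵥ u = 1) (hker : ∀ v, G *ᵥ v = 0 → v ∈ K ∙ u) {c μ : K}
    (hμ : μ ∈ spectrum K (G + c • vecMulVec u r)) :
    μ = c ∨ μ ∈ spectrum K G ∧ μ ≠ 0 := by
  obtain ⟨v, hv, hGv⟩ := mem_spectrum_iff_exists_mulVec_eq_smul.1 hμ
  replace hGv : G *ᵥ v + (c * (r ⬝ᵥ v)) • u = μ • v := by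
    rw [← hGv, add_mulVec, smul_mulVec, vecMulVec_mulVec, op_smul_eq_smul, smul_smul]
  have hrv : c * (r ⬝ᵥ v) = μ * (r ⬝ᵥ v) := by
    simpa [dotProduct_mulVec, hrG, hru] using congrArg (r ⬝ᵥ ·) hGv
  by_cases hrv0 : r ⬝ᵥ v = 0
  · rw [hrv0, mul_zero, zero_smul, add_zero] at hGv
    refine .inr ⟨mem_spectrum_iff_exists_mulVec_eq_smul.2 ⟨v, hv, hGv⟩, ?_⟩
    rintro rfl
    obtain ⟨a, rfl⟩ := Submodule.mem_span_singleton.1 (hker v (by rw [hGv, zero_smul]))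
    rw [dotProduct_smul, hru, smul_eq_mul, mul_one] at hrv0
    exact hv (by rw [hrv0, zero_smul])
  · exact .inl (mul_right_cancel₀ hrv0 hrv).symm

end Spectrum

section MatrixExp

variable {𝕜 : Type*} [RCLike 𝕜] {ι κ : Type*} [Fintype ι] [DecidableEq ι] [Fintype κ]
  [DecidableEq κ]

theorem semiconjBy_matrix_exp {X Y Z : Matrix ι ι 𝕜} (h : SemiconjBy Z X Y) :
    SemiconjBy Z (NormedSpace.exp X) (NormedSpace.exp Y) :=
  open scoped Matrix.Norms.Operator in h.exp_right

theorem map_matrix_exp {𝕜' : Type*} [RCLike 𝕜'] (f : Matrix ι ι 𝕜 →+* Matrix κ κ 𝕜')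
    (hf : Continuous f) (X : Matrix ι ι 𝕜) :
    f (NormedSpace.exp X) = NormedSpace.exp (f X) :=
  open scoped Matrix.Norms.Operator in NormedSpace.map_exp f hf X

theorem hasSum_matrix_exp_mulVec (X : Matrix ι ι 𝕜) (v : ι → 𝕜) :
    HasSum (fun k : ℕ => (k.factorial : 𝕜)⁻¹ • (X ^ k *ᵥ v)) (NormedSpace.exp X *ᵥ v) := by
  have hexp : HasSum (fun k : ℕ => (k.factorial : 𝕜)⁻¹ • X ^ k) (NormedSpace.exp X) :=
    open scoped Matrix.Norms.Operator in NormedSpace.exp_series_hasSum_exp' (𝕂 := 𝕜) X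
  simp only [← smul_mulVec]
  exact hexp.map (mulVec.addMonoidHomLeft v) (continuous_id.matrix_mulVec continuous_const)

theorem map_ofReal_matrix_exp (X : Matrix ι ι ℝ) :
    (NormedSpace.exp X).map Complex.ofReal = NormedSpace.exp (X.map Complex.ofReal) :=
  map_matrix_exp Complex.ofRealHom.mapMatrix (continuous_id.matrix_map Complex.continuous_ofReal) X

theorem exp_one_kronecker (X : Matrix κ κ 𝕜) :
    NormedSpace.exp ((1 : Matrix ι ι 𝕜) ⊗ₖ X) = 1 ⊗ₖ NormedSpace.exp X := by
  let f : Matrix κ κ 𝕜 →+* Matrix (ι × κ) (ι × κ) 𝕜 :=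
    { toFun := fun Y => 1 ⊗ₖ Y
      map_one' := one_kronecker_one
      map_mul' := fun Y Z => by rw [← mul_kronecker_mul, one_mul]
      map_zero' := kronecker_zero _
      map_add' := kronecker_add _ }
  have hf : Continuous f := continuous_matrix fun a b =>
    continuous_const.mul (continuous_id.matrix_elem a.2 b.2)
  exact (map_matrix_exp f hf X).symm

theorem exp_mulVec_eq_sum_of_pow_mulVec_eq_zero {N : Matrix ι ι 𝕜} {v : ι → 𝕜} {k : ℕ}
    (h : N ^ k *ᵥ v = 0) :
    NormedSpace.exp N *ᵥ v = ∑ j ∈ Finset.range k, (j.factorial : 𝕜)⁻¹ • (N ^ j *ᵥ v) := by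
  refine (hasSum_matrix_exp_mulVec N v).unique (hasSum_sum_of_ne_finset_zero fun j hj => ?_)
  obtain ⟨l, rfl⟩ := Nat.exists_eq_add_of_le' (not_lt.1 (Finset.mem_range.not.1 hj))
  rw [pow_add, ← mulVec_mulVec, h, mulVec_zero, smul_zero]

theorem exp_add_smul_one (N : Matrix ι ι ℂ) (a : ℂ) :
    NormedSpace.exp (N + a • 1) = Complex.exp a • NormedSpace.exp N := by
  have hscalar : NormedSpace.exp (a • (1 : Matrix ι ι ℂ)) = Complex.exp a • 1 := by
    rw [smul_one_eq_diagonal, Matrix.exp_diagonal, smul_one_eq_diagonal, Complex.exp_eq_exp_ℂ]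
    congr 1
    ext i
    rw [Pi.coe_exp]
  rw [Matrix.exp_add_of_commute _ _ ((Commute.one_right N).smul_right a), hscalar, mul_smul_comm,
    mul_one]

theorem exp_kronecker_sub_kronecker_exp {G J : Matrix ι ι 𝕜} (hJJ : J * J = J) (hGJ : G * J = 0)
    (hJG : J * G = 0) (c : 𝕜) (A B : Matrix κ κ 𝕜) :
    NormedSpace.exp ((1 : Matrix ι ι 𝕜) ⊗ₖ A + G ⊗ₖ B) - J ⊗ₖ NormedSpace.exp A =
      ((1 - J) ⊗ₖ 1) * NormedSpace.exp ((1 : Matrix ι ι 𝕜) ⊗ₖ A + (G + c • J) ⊗ₖ B) := by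
  -- `J ⊗ 1` intertwines `1 ⊗ A`, and `(1 - J) ⊗ 1` the deflated generator, with `1 ⊗ A + G ⊗ B`.
  have hrange : SemiconjBy (J ⊗ₖ 1) ((1 : Matrix ι ι 𝕜) ⊗ₖ A)
      ((1 : Matrix ι ι 𝕜) ⊗ₖ A + G ⊗ₖ B) := by
    simp only [SemiconjBy, add_mul, ← mul_kronecker_mul, one_mul, mul_one, hGJ, zero_kronecker,
      add_zero]
  have hker : SemiconjBy ((1 - J) ⊗ₖ 1) ((1 : Matrix ι ι 𝕜) ⊗ₖ A + (G + c • J) ⊗ₖ B)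
      ((1 : Matrix ι ι 𝕜) ⊗ₖ A + G ⊗ₖ B) := by
    have hG : (1 - J) * (G + c • J) = G * (1 - J) := by
      simp only [sub_mul, mul_sub, mul_add, one_mul, mul_one, hGJ, hJG, hJJ, mul_smul_comm,
        sub_self, smul_zero, sub_zero, add_zero]
    simp only [SemiconjBy, add_mul, mul_add, ← mul_kronecker_mul, one_mul, mul_one, hG]
  have hsplit : (1 - J) ⊗ₖ (1 : Matrix κ κ 𝕜) = 1 - J ⊗ₖ 1 := by
    rw [eq_sub_iff_add_eq, ← add_kronecker, sub_add_cancel, one_kronecker_one]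
  have hJexp := (semiconjBy_matrix_exp hrange).eq
  rw [exp_one_kronecker, ← mul_kronecker_mul, one_mul, mul_one] at hJexp
  rw [(semiconjBy_matrix_exp hker).eq, hsplit, mul_sub, mul_one, ← hJexp]

end MatrixExp

section Hurwitz

variable {ι : Type*} [Fintype ι] [DecidableEq ι]

/-- A Hurwitz matrix: one whose eigenvalues all lie in the open left half-plane. -/
def IsHurwitz (M : Matrix ι ι ℂ) : Prop :=
  ∀ μ ∈ spectrum ℂ M, μ.re < 0

theorem tendsto_cexp_mul_pow_atTop_nhds_zero {s : ℂ} (hs : s.re < 0) (j : ℕ) :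
    Tendsto (fun t : ℝ => Complex.exp (t * s) * (t : ℂ) ^ j) atTop (𝓝 0) := by
  rw [tendsto_zero_iff_norm_tendsto_zero]
  refine (tendsto_rpow_mul_exp_neg_mul_atTop_nhds_zero j (-s.re) (neg_pos.2 hs)).congr' ?_
  filter_upwards [eventually_ge_atTop 0] with t ht
  rw [norm_mul, Complex.norm_exp, Complex.re_ofReal_mul, norm_pow, Complex.norm_real,
    Real.norm_of_nonneg ht, Real.rpow_natCast, mul_comm, neg_neg, mul_comm s.re]

theorem tendsto_exp_smul_mulVec_of_sub_smul_one_pow_mulVec_eq_zero {M : Matrix ι ι ℂ} {s : ℂ}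
    (hs : s.re < 0) {k : ℕ} {v : ι → ℂ} (hv : (M - s • 1) ^ k *ᵥ v = 0) :
    Tendsto (fun t : ℝ => NormedSpace.exp ((t : ℂ) • M) *ᵥ v) atTop (𝓝 0) := by
  set N := M - s • 1 with hN
  have hexp (t : ℝ) : NormedSpace.exp ((t : ℂ) • M) *ᵥ v =
      ∑ j ∈ Finset.range k,
        (Complex.exp (t * s) * (t : ℂ) ^ j) • ((j.factorial : ℂ)⁻¹ • (N ^ j *ᵥ v)) := by
    have hsplit : (t : ℂ) • M = (t : ℂ) • N + (t * s : ℂ) • 1 := by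
      rw [hN, smul_sub, smul_smul, sub_add_cancel]
    have hnil : ((t : ℂ) • N) ^ k *ᵥ v = 0 := by rw [smul_pow, smul_mulVec, hv, smul_zero]
    rw [hsplit, exp_add_smul_one, smul_mulVec, exp_mulVec_eq_sum_of_pow_mulVec_eq_zero hnil,
      Finset.smul_sum]
    refine Finset.sum_congr rfl fun j _ => ?_
    rw [smul_pow, smul_mulVec, smul_comm _ ((t : ℂ) ^ j), smul_smul]
  have hlim := tendsto_finsetSum (Finset.range k) fun j _ =>
    (tendsto_cexp_mul_pow_atTop_nhds_zero hs j).smul_const ((j.factorial : ℂ)⁻¹ • (N ^ j *ᵥ v))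
  simpa only [hexp, zero_smul, Finset.sum_const_zero] using hlim

theorem IsHurwitz.tendsto_exp_smul_mulVec {M : Matrix ι ι ℂ} (hM : IsHurwitz M) (v : ι → ℂ) :
    Tendsto (fun t : ℝ => NormedSpace.exp ((t : ℂ) • M) *ᵥ v) atTop (𝓝 0) := by
  have hv : v ∈ ⨆ s : ℂ, Module.End.maxGenEigenspace (toLin' M) s := by
    rw [Module.End.iSup_maxGenEigenspace_eq_top]
    exact Submodule.mem_top
  induction hv using Submodule.iSup_induction' with
  | zero => simp only [mulVec_zero, tendsto_const_nhds]
  | add x y _ _ hx hy => simpa only [mulVec_add, add_zero] using hx.add hy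
  | mem s x hx =>
    rcases eq_or_ne x 0 with rfl | hx0
    · simp only [mulVec_zero, tendsto_const_nhds]
    have hgen : Module.End.HasUnifEigenvalue (toLin' M) s ⊤ :=
      (Submodule.ne_bot_iff _).2 ⟨x, hx, hx0⟩
    have hs : s ∈ spectrum ℂ M := by
      rw [← spectrum_toLin', ← Module.End.hasEigenvalue_iff_mem_spectrum]
      exact hgen.lt zero_lt_one
    obtain ⟨k, hk⟩ := (Module.End.mem_maxGenEigenspace _ s x).1 hx
    refine tendsto_exp_smul_mulVec_of_sub_smul_one_pow_mulVec_eq_zero (hM s hs) (k := k) ?_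
    have hsub : toLin' M - s • 1 = toLin' (M - s • 1) := by
      rw [map_sub, map_smul, toLin'_one, Module.End.one_eq_id]
    rwa [hsub, ← toLin'_pow, toLin'_apply] at hk

theorem tendsto_exp_smul_mulVec_of_isHurwitz_map {M : Matrix ι ι ℝ}
    (hM : IsHurwitz (M.map Complex.ofReal)) (v : ι → ℝ) :
    Tendsto (fun t : ℝ => NormedSpace.exp (t • M) *ᵥ v) atTop (𝓝 0) := by
  have hre (t : ℝ) : NormedSpace.exp (t • M) *ᵥ v = fun i =>
      ((NormedSpace.exp ((t : ℂ) • M.map Complex.ofReal) *ᵥ (Complex.ofReal ∘ v)) i).re := by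
    have hmap : (t : ℂ) • M.map Complex.ofReal = (t • M).map Complex.ofReal := by
      ext; simp
    rw [hmap, ← map_ofReal_matrix_exp]
    funext i
    rw [← Complex.ofReal_re ((NormedSpace.exp (t • M) *ᵥ v) i)]
    exact congrArg Complex.re (RingHom.map_mulVec Complex.ofRealHom _ v i)
  have hlim := tendsto_pi_nhds.1 (hM.tendsto_exp_smul_mulVec (Complex.ofReal ∘ v))
  simp only [hre]
  exact tendsto_pi_nhds.2 fun i => (Complex.continuous_re.tendsto 0).comp (hlim i)

end Hurwitz

section Lyapunov

open scoped ComplexOrder MatrixOrder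

theorem posSemidef_map_ofReal {ι : Type*} [Finite ι] {M : Matrix ι ι ℝ} (hM : M.PosSemidef) :
    (M.map Complex.ofReal).PosSemidef := by
  classical
  have := Fintype.ofFinite ι
  obtain ⟨N, rfl⟩ := CStarAlgebra.nonneg_iff_eq_star_mul_self.1 hM.nonneg
  have hmap : (star N * N).map Complex.ofReal =
      (N.map Complex.ofReal)ᴴ * N.map Complex.ofReal := by
    rw [← conjTranspose_map Complex.ofReal fun x => (Complex.conj_ofReal x).symm]
    exact Matrix.map_mul (f := Complex.ofRealHom)
  rw [hmap]
  exact posSemidef_conjTranspose_mul_self _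

theorem posDef_map_ofReal {ι : Type*} [Finite ι] {M : Matrix ι ι ℝ} (hM : M.PosDef) :
    (M.map Complex.ofReal).PosDef := by
  classical
  have := Fintype.ofFinite ι
  exact (posSemidef_map_ofReal hM.posSemidef).posDef_iff_isUnit.2
    (hM.isUnit.map Complex.ofRealHom.mapMatrix)

variable {ι : Type*} [Fintype ι] [DecidableEq ι]

theorem isHurwitz_of_lyapunov {F P : Matrix ι ι ℂ} (hP : P.PosDef)
    (hF : (-(F * P + P * Fᴴ)).PosDef) : IsHurwitz F := by
  intro μ hμ
  have hμ' : star μ ∈ spectrum ℂ Fᴴ := by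
    rw [← star_eq_conjTranspose, spectrum.map_star]
    exact Set.star_mem_star.2 hμ
  -- Test the Lyapunov form on a left eigenvector of `F`: it equals `2 Re μ · w*Pw`.
  obtain ⟨w, hw, hFw⟩ := mem_spectrum_iff_exists_mulVec_eq_smul.1 hμ'
  have hwF : star w ᵥ* F = μ • star w := by
    rw [← star_inj, star_vecMul, star_star, hFw, star_smul, star_star]
  have hquad : star w ⬝ᵥ (-(F * P + P * Fᴴ)) *ᵥ w =
      -((2 * μ.re : ℝ) : ℂ) * (star w ⬝ᵥ P *ᵥ w) := by
    rw [neg_mulVec, dotProduct_neg, add_mulVec, dotProduct_add, ← mulVec_mulVec, ← mulVec_mulVec,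
      hFw, dotProduct_mulVec, hwF, smul_dotProduct, mulVec_smul, dotProduct_smul, smul_eq_mul,
      smul_eq_mul, ← add_mul, ← neg_mul, ← Complex.add_conj]
    rfl
  have hneg := hF.dotProduct_mulVec_pos hw
  have hpos := hP.dotProduct_mulVec_pos hw
  rw [hquad, ← Complex.ofReal_neg] at hneg
  have hre := (pos_iff_pos_of_mul_pos hneg).2 hpos
  rw [Complex.zero_lt_real] at hre
  linarith

theorem isHurwitz_add_smul_of_riccati {A K P : Matrix ι ι ℂ} (hP : P.PosDef)
    (hKP : (K * P).PosSemidef) (hRiccati : (K * P - (A * P + P * Aᴴ)).PosDef) {z : ℂ}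
    (hz : 2 * z.re ≤ -1) : IsHurwitz (A + z • K) := by
  refine isHurwitz_of_lyapunov hP ?_
  have hPK : P * Kᴴ = K * P := by
    rw [← hKP.isHermitian.eq, conjTranspose_mul, hP.isHermitian.eq]
  have hsum : -((A + z • K) * P + P * (A + z • K)ᴴ) =
      (K * P - (A * P + P * Aᴴ)) + (-1 - 2 * z.re) • (K * P) := by
    have hzz : z + star z = ((2 * z.re : ℝ) : ℂ) := Complex.add_conj z
    have hKPz : (2 * z.re) • (K * P) = z • (K * P) + star z • (K * P) := by
      rw [← add_smul, hzz, Complex.coe_smul]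
    rw [conjTranspose_add, conjTranspose_smul, Matrix.add_mul, Matrix.mul_add, smul_mul,
      Matrix.mul_smul, hPK, sub_smul, hKPz, neg_one_smul]
    abel
  rw [hsum]
  exact hRiccati.add_posSemidef (hKP.smul (by linarith))

theorem isHurwitz_map_add_smul_of_riccati {ν : Type*} [Fintype ν] {A P : Matrix ι ι ℝ}
    {C : Matrix ν ι ℝ} (hP : P.PosDef)
    (hRiccati : (P * Cᵀ * C * P - (A * P + P * Aᵀ)).PosDef) {c : ℝ} {μ : ℂ}
    (hμ : 2 * (c * μ.re) ≤ -1) :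
    IsHurwitz (A.map Complex.ofReal + μ • ((c • (P * Cᵀ)) * C).map Complex.ofReal) := by
  have hKP : (P * Cᵀ * C * P).PosSemidef := by
    have h := posSemidef_conjTranspose_mul_self (C * P)
    rwa [conjTranspose_mul, hP.isHermitian.eq, conjTranspose_eq_transpose_of_trivial,
      ← Matrix.mul_assoc] at h
  let φ : Matrix ι ι ℝ →+* Matrix ι ι ℂ := Complex.ofRealHom.mapMatrix
  have hφA : φ Aᵀ = (φ A)ᴴ :=
    conjTranspose_map Complex.ofReal fun x => (Complex.conj_ofReal x).symm
  have hφL : μ • φ ((c • (P * Cᵀ)) * C) = (μ * c) • φ (P * Cᵀ * C) := by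
    rw [smul_mul, mul_smul]
    congr 1
    ext i j
    exact Complex.ofReal_mul c _
  have hKPφ : (φ (P * Cᵀ * C) * φ P).PosSemidef := by
    rw [← map_mul]
    exact posSemidef_map_ofReal hKP
  have hRiccatiφ : (φ (P * Cᵀ * C) * φ P - (φ A * φ P + φ P * (φ A)ᴴ)).PosDef := by
    rw [← hφA, ← map_mul, ← map_mul, ← map_mul, ← map_add, ← map_sub]
    exact posDef_map_ofReal hRiccati
  change IsHurwitz (φ A + μ • φ ((c • (P * Cᵀ)) * C))
  rw [hφL]
  refine isHurwitz_add_smul_of_riccati (posDef_map_ofReal hP) hKPφ hRiccatiφ ?_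
  rwa [Complex.re_mul_ofReal, mul_comm μ.re]

theorem posDef_sub_of_add_one_sub_eq_zero {κ : Type*} [DecidableEq κ] {S Q : Matrix κ κ ℝ}
    (h : S + 1 - Q = 0) : (Q - S).PosDef := by
  rw [sub_eq_iff_eq_add'.2 (sub_eq_zero.1 h).symm]
  exact PosDef.one

end Lyapunov

section Kernel

theorem mem_span_ofReal_of_map_mulVec_eq_zero {ι κ : Type*} [Fintype ι] {G : Matrix κ ι ℝ}
    {u : ι → ℝ} (hker : ∀ v, G *ᵥ v = 0 → v ∈ ℝ ∙ u) {v : ι → ℂ}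
    (hv : G.map Complex.ofReal *ᵥ v = 0) : v ∈ ℂ ∙ (Complex.ofReal ∘ u) := by
  have hre : G *ᵥ (fun i => (v i).re) = 0 := by
    funext i
    simpa [mulVec, dotProduct] using congrArg Complex.re (congrFun hv i)
  have him : G *ᵥ (fun i => (v i).im) = 0 := by
    funext i
    simpa [mulVec, dotProduct] using congrArg Complex.im (congrFun hv i)
  obtain ⟨a, ha⟩ := Submodule.mem_span_singleton.1 (hker _ hre)
  obtain ⟨b, hb⟩ := Submodule.mem_span_singleton.1 (hker _ him)
  refine Submodule.mem_span_singleton.2 ⟨⟨a, b⟩, funext fun i => Complex.ext ?_ ?_⟩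
  · simpa using congrFun ha i
  · simpa using congrFun hb i

theorem IsInterconnection.mulVec_one {p : ℕ} {Γ : Matrix (Fin p) (Fin p) ℝ}
    (hΓ : IsInterconnection Γ) : Γ *ᵥ 1 = 0 := by
  funext i
  simpa only [mulVec, dotProduct_one, Pi.zero_apply] using hΓ.2 i

theorem IsInterconnection.eq_of_forall_le {p : ℕ} {Γ : Matrix (Fin p) (Fin p) ℝ}
    (hΓ : IsInterconnection Γ) {v : Fin p → ℝ} (hv : Γ *ᵥ v = 0) {a b : Fin p}
    (hmax : ∀ x, v x ≤ v a) (hab : 0 < Γ a b) : v a = v b := by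
  -- A vanishing sum of nonnegative terms: every term, in particular the one at `b`, vanishes.
  have hsum : ∑ x, Γ a x * (v a - v x) = 0 := by
    have hva : ∑ x, Γ a x * v x = 0 := congrFun hv a
    simp only [mul_sub, Finset.sum_sub_distrib, ← Finset.sum_mul, hΓ.2 a, hva, zero_mul, sub_zero]
  have hnonneg : ∀ x ∈ Finset.univ, 0 ≤ Γ a x * (v a - v x) := by
    intro x _
    rcases eq_or_ne a x with rfl | hax
    · rw [sub_self, mul_zero]
    · exact mul_nonneg (hΓ.1 a x hax) (sub_nonneg.2 (hmax x))
  have hterm := (Finset.sum_eq_zero_iff_of_nonneg hnonneg).1 hsum b (Finset.mem_univ b)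
  exact sub_eq_zero.1 ((mul_eq_zero.1 hterm).resolve_left hab.ne')

theorem IsInterconnection.le_of_forall_reflTransGen {p : ℕ} {Γ : Matrix (Fin p) (Fin p) ℝ}
    (hΓ : IsInterconnection Γ) {v : Fin p → ℝ} (hv : Γ *ᵥ v = 0) {k : Fin p}
    (hk : ∀ i, Relation.ReflTransGen (fun a b => 0 < Γ a b) i k) (i : Fin p) : v i ≤ v k := by
  obtain ⟨j, -, hj⟩ := Finset.exists_max_image Finset.univ v ⟨k, Finset.mem_univ k⟩
  have hpath {b} (hb : Relation.ReflTransGen (fun a b => 0 < Γ a b) j b) : ∀ x, v x ≤ v b := by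
    induction hb with
    | refl => exact fun x => hj x (Finset.mem_univ x)
    | tail _ hbc hmax => exact fun x => (hmax x).trans_eq (hΓ.eq_of_forall_le hv hmax hbc)
  exact hpath (hk j) i

theorem IsConnectedInterconnection.mem_span_one {p : ℕ} {Γ : Matrix (Fin p) (Fin p) ℝ}
    (hΓ : IsConnectedInterconnection Γ) {v : Fin p → ℝ} (hv : Γ *ᵥ v = 0) :
    v ∈ ℝ ∙ (1 : Fin p → ℝ) := by
  obtain ⟨hΓ, k, hk⟩ := hΓ
  have hle := hΓ.le_of_forall_reflTransGen hv hk
  have hge := hΓ.le_of_forall_reflTransGen (v := -v) (by rw [mulVec_neg, hv, neg_zero]) hk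
  refine Submodule.mem_span_singleton.2 ⟨v k, funext fun i => ?_⟩
  rw [Pi.smul_apply, Pi.one_apply, smul_eq_mul, mul_one]
  exact (neg_le_neg_iff.1 (hge i)).antisymm (hle i)

end Kernel

section Synchronization

theorem vecMulVec_one_kronecker_mulVec_apply {R ι κ : Type*} [CommSemiring R] [Fintype ι]
    [Fintype κ] (r : ι → R) (B : Matrix κ κ R) (x : ι × κ → R) (i : ι) (k : κ) :
    ((vecMulVec 1 r ⊗ₖ B) *ᵥ x) (i, k) = ∑ j, r j * (B *ᵥ fun l => x (j, l)) k := by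
  simp only [mulVec, dotProduct, Fintype.sum_prod_type, kronecker_apply, vecMulVec_apply,
    Pi.one_apply, one_mul, mul_assoc, Finset.mul_sum]

variable {ι κ : Type*} [Fintype ι] [DecidableEq ι] [Fintype κ] [DecidableEq κ]

theorem eq_or_mem_spectrum_of_mem_spectrum_map_add_smul_vecMulVec {G : Matrix ι ι ℝ}
    {u r : ι → ℝ} (hrG : r ᵥ* G = 0) (hru : r ⬝ᵥ u = 1) (hker : ∀ v, G *ᵥ v = 0 → v ∈ ℝ ∙ u)
    {c : ℝ} {μ : ℂ} (hμ : μ ∈ spectrum ℂ ((G + c • vecMulVec u r).map Complex.ofReal)) :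
    μ = c ∨ μ ∈ spectrum ℂ (G.map Complex.ofReal) ∧ μ ≠ 0 := by
  have hmap : (G + c • vecMulVec u r).map Complex.ofReal = G.map Complex.ofReal +
      (c : ℂ) • vecMulVec (Complex.ofReal ∘ u) (Complex.ofReal ∘ r) := by
    ext; simp [vecMulVec_apply]
  rw [hmap] at hμ
  refine eq_or_mem_spectrum_of_mem_spectrum_add_smul_vecMulVec ?_ ?_
    (fun v => mem_span_ofReal_of_map_mulVec_eq_zero hker) hμ
  · funext i
    refine (RingHom.map_vecMul Complex.ofRealHom G r i).symm.trans ?_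
    rw [hrG, Pi.zero_apply, map_zero, Pi.zero_apply]
  · exact (RingHom.map_dotProduct Complex.ofRealHom r u).symm.trans (by rw [hru, map_one])

theorem tendsto_exp_kronecker_mulVec_sub_kronecker_exp_mulVec {A B : Matrix κ κ ℝ}
    {G J : Matrix ι ι ℝ} (hJJ : J * J = J) (hGJ : G * J = 0) (hJG : J * G = 0) {c : ℝ}
    (hAB : ∀ μ ∈ spectrum ℂ ((G + c • J).map Complex.ofReal),
      IsHurwitz (A.map Complex.ofReal + μ • B.map Complex.ofReal)) (x : ι × κ → ℝ) :
    Tendsto (fun t : ℝ =>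
        NormedSpace.exp (t • ((1 : Matrix ι ι ℝ) ⊗ₖ A + G ⊗ₖ B)) *ᵥ x
          - (J ⊗ₖ NormedSpace.exp (t • A)) *ᵥ x) atTop (𝓝 0) := by
  have hHurwitz : IsHurwitz
      (((1 : Matrix ι ι ℝ) ⊗ₖ A + (G + c • J) ⊗ₖ B).map Complex.ofReal) := by
    have hmap : ((1 : Matrix ι ι ℝ) ⊗ₖ A + (G + c • J) ⊗ₖ B).map Complex.ofReal =
        (1 : Matrix ι ι ℂ) ⊗ₖ A.map Complex.ofReal +
          (G + c • J).map Complex.ofReal ⊗ₖ B.map Complex.ofReal := by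
      ext ⟨i, k⟩ ⟨j, l⟩
      simp [one_apply, apply_ite Complex.ofReal]
    intro μ hμ
    rw [hmap] at hμ
    obtain ⟨ν, hν, hμν⟩ := exists_mem_spectrum_add_smul_of_mem_spectrum_kronecker hμ
    exact hAB ν hν μ hμν
  have hexp (t : ℝ) : NormedSpace.exp (t • ((1 : Matrix ι ι ℝ) ⊗ₖ A + G ⊗ₖ B)) *ᵥ x
      - (J ⊗ₖ NormedSpace.exp (t • A)) *ᵥ x = ((1 - J) ⊗ₖ (1 : Matrix κ κ ℝ)) *ᵥ
        NormedSpace.exp (t • ((1 : Matrix ι ι ℝ) ⊗ₖ A + (G + c • J) ⊗ₖ B)) *ᵥ x := by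
    simp only [smul_add, ← kronecker_smul]
    rw [← sub_mulVec, exp_kronecker_sub_kronecker_exp hJJ hGJ hJG c, mulVec_mulVec]
  have hcont : Continuous fun y => ((1 - J) ⊗ₖ (1 : Matrix κ κ ℝ)) *ᵥ y :=
    continuous_const.matrix_mulVec continuous_id
  simp only [hexp]
  exact (hcont.tendsto' 0 0 (mulVec_zero _)).comp
    (tendsto_exp_smul_mulVec_of_isHurwitz_map hHurwitz x)

theorem one_le_two_mul_mul_max_one_inv {δ : ℝ} (hδ : 0 < δ) : 1 ≤ 2 * δ * max 1 δ⁻¹ := by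
  have hinv : δ * δ⁻¹ ≤ δ * max 1 δ⁻¹ := mul_le_mul_of_nonneg_left (le_max_right 1 δ⁻¹) hδ.le
  rw [mul_inv_cancel₀ hδ.ne'] at hinv
  linarith

theorem detectable_synchronizable_strong_coupling_general {ν : Type*} [Fintype ν]
    {δ c : ℝ} (hδ : 0 < δ) (hc : 1 ≤ 2 * δ * c)
    {A P : Matrix κ κ ℝ} {C : Matrix ν κ ℝ} (hP : P.PosDef)
    (hRiccati : (P * Cᵀ * C * P - (A * P + P * Aᵀ)).PosDef)
    {Γ : Matrix ι ι ℝ} (hΓ : Γ *ᵥ 1 = 0) (hker : ∀ v, Γ *ᵥ v = 0 → v ∈ ℝ ∙ (1 : ι → ℝ))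
    (hspec : ∀ μ ∈ spectrum ℂ (Γ.map Complex.ofReal), μ ≠ 0 → μ.re ≤ -δ)
    {r : ι → ℝ} (hr : r ᵥ* Γ = 0) (hr1 : ∑ i, r i = 1) (x0 : ι × κ → ℝ) :
    Tendsto (fun t : ℝ =>
        NormedSpace.exp (t • ((1 : Matrix ι ι ℝ) ⊗ₖ A + Γ ⊗ₖ ((c • (P * Cᵀ)) * C))) *ᵥ x0
          - (vecMulVec 1 r ⊗ₖ NormedSpace.exp (t • A)) *ᵥ x0)
      atTop (𝓝 0) ∧
    ∀ i, Tendsto (fun t : ℝ => fun k =>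
          (NormedSpace.exp (t • ((1 : Matrix ι ι ℝ) ⊗ₖ A
              + Γ ⊗ₖ ((c • (P * Cᵀ)) * C))) *ᵥ x0) (i, k)
            - ∑ j, r j * (NormedSpace.exp (t • A) *ᵥ fun l => x0 (j, l)) k)
        atTop (𝓝 0) := by
  have hru : r ⬝ᵥ 1 = 1 := by rw [dotProduct_one, hr1]
  have hJJ : vecMulVec 1 r * vecMulVec 1 r = (vecMulVec 1 r : Matrix ι ι ℝ) := by
    rw [vecMulVec_mul_vecMulVec, hru, one_smul]
  have hΓJ : Γ * vecMulVec 1 r = (0 : Matrix ι ι ℝ) := by rw [mul_vecMulVec, hΓ, zero_vecMulVec]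
  have hJΓ : vecMulVec 1 r * Γ = (0 : Matrix ι ι ℝ) := by rw [vecMulVec_mul, hr, vecMulVec_zero]
  have hc0 : 0 < c := pos_of_mul_pos_right (by linarith) (by positivity : 0 ≤ 2 * δ)
  have hHurwitz : ∀ μ ∈ spectrum ℂ ((Γ + (-δ) • vecMulVec 1 r).map Complex.ofReal),
      IsHurwitz (A.map Complex.ofReal + μ • ((c • (P * Cᵀ)) * C).map Complex.ofReal) := by
    intro μ hμ
    have hre : μ.re ≤ -δ := by
      rcases eq_or_mem_spectrum_of_mem_spectrum_map_add_smul_vecMulVec hr hru hker hμ with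
        rfl | ⟨hμΓ, hμ0⟩
      · rw [Complex.ofReal_re]
      · exact hspec μ hμΓ hμ0
    refine isHurwitz_map_add_smul_of_riccati hP hRiccati ?_
    calc
      2 * (c * μ.re) ≤ 2 * (c * -δ) :=
        mul_le_mul_of_nonneg_left (mul_le_mul_of_nonneg_left hre hc0.le) two_pos.le
      _ ≤ -1 := by linarith
  have hlim := tendsto_exp_kronecker_mulVec_sub_kronecker_exp_mulVec hJJ hΓJ hJΓ hHurwitz x0
  refine ⟨hlim, fun i => ?_⟩
  simp only [← vecMulVec_one_kronecker_mulVec_apply r _ x0 i]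
  exact tendsto_pi_nhds.2 fun k => tendsto_pi_nhds.1 hlim (i, k)

end Synchronization

/-- If `P` is a symmetric positive-definite solution of the Riccati equation
`AP + PAᵀ + I - PCᵀCP = 0` and `δ > 0`, then the feedback law `L = max{1, δ⁻¹} PCᵀ`
synchronizes the array for every connected interconnection `Γ` whose nonzero eigenvalues
satisfy `Re(λ) ≤ -δ`: the solution `x(t) = exp(t(I_p ⊗ A + Γ ⊗ LC)) x(0)` converges to
`(1rᵀ ⊗ exp(tA)) x(0)`, and each block synchronizes to `x̄(t) = (rᵀ ⊗ exp(tA)) x(0)`. -/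
theorem detectable_synchronizable_strong_coupling
    (δ : ℝ) (hδ : 0 < δ)
    (n m : ℕ) (A : Matrix (Fin n) (Fin n) ℝ) (C : Matrix (Fin m) (Fin n) ℝ)
    (P : Matrix (Fin n) (Fin n) ℝ) (hPsymm : Pᵀ = P) (hPpos : P.PosDef)
    (hRiccati : A * P + P * Aᵀ + 1 - P * Cᵀ * C * P = 0)
    (p : ℕ) (Γ : Matrix (Fin p) (Fin p) ℝ) (hΓ : IsConnectedInterconnection Γ)
    (hspec : ∀ μ ∈ spectrum ℂ (Γ.map Complex.ofReal), μ ≠ 0 → μ.re ≤ -δ)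
    (r : Fin p → ℝ) (hr : r ᵥ* Γ = 0) (hr1 : ∑ i, r i = 1)
    (x0 : Fin p × Fin n → ℝ) :
    Tendsto (fun t : ℝ =>
        NormedSpace.exp (t • ((1 : Matrix (Fin p) (Fin p) ℝ) ⊗ₖ A
            + Γ ⊗ₖ ((max 1 δ⁻¹ • (P * Cᵀ)) * C))) *ᵥ x0
          - (vecMulVec (fun _ => (1 : ℝ)) r ⊗ₖ NormedSpace.exp (t • A)) *ᵥ x0)
      atTop (nhds 0) ∧
    ∀ i : Fin p,
      Tendsto (fun t : ℝ => (fun k : Fin n =>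
          (NormedSpace.exp (t • ((1 : Matrix (Fin p) (Fin p) ℝ) ⊗ₖ A
              + Γ ⊗ₖ ((max 1 δ⁻¹ • (P * Cᵀ)) * C))) *ᵥ x0) (i, k)
            - ∑ j : Fin p, r j * (NormedSpace.exp (t • A) *ᵥ fun l => x0 (j, l)) k))
        atTop (nhds 0) := by
  exact detectable_synchronizable_strong_coupling_general hδ (one_le_two_mul_mul_max_one_inv hδ)
    hPpos (posDef_sub_of_add_one_sub_eq_zero hRiccati) hΓ.1.mulVec_one (fun _ => hΓ.mem_span_one)
    hspec hr hr1 x0
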